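/- arXiv:1506.04656 — 2 statements merged into one kernel-verified Lean document; each statement's English description precedes it below -/
import Mathlib

section
/- Let m ≥ 2 and a, b ∈ ℝ, and suppose the polynomial λ² + aλ + b has non-real complex conjugate roots r(cos θ ± i sin θ), with r > 0 and θ ∈ (0, 2π)∖{π} (equivalently a = −2r cos θ, b = r², sin θ ≠ 0). Let f₁,…,f_m, g₁,…,g_m : ℕ^{m-1} → ℝ satisfy, for all α, β ∈ {1,…,m}, the compatibility conditions: f_α|_{t^β=0} = f_β|_{t^α=0}, g_α|_{t^β=1} = g_β|_{t^α=1}, and f_α|_{t^β=1} = g_β|_{t^α=0}, for all values of the remaining variables. Then the unique function x : ℕᵐ → ℝ satisfying x(t + 2·𝟏) + a·x(t + 𝟏) + b·x(t) = 0 for all t ∈ ℕᵐ, x(t)|_{t^γ=0} = f_γ and x(t)|_{t^γ=1} = g_γ for all γ ∈ {1,…,m}, is given, whenever μ(t) = t^β, by x(t) = (r^{t^β−1} sin(t^β θ)/sin θ) · g_β(t¹−t^β+1,…,t̂^β,…,tᵐ−t^β+1) − (r^{t^β} sin((t^β−1)θ)/sin θ) · f_β(t¹−t^β,…,t̂^β,…,tᵐ−t^β).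 -/
/-!
Adding multiples of `𝟏` moves a point along a diagonal ray, and each ray starts at the unique point
`t - μ(t)·𝟏` of it that has a vanishing coordinate. On a ray the equation is an ordinary second
order recurrence, whose two initial values are prescribed by `f` and `g`; hence the solution is a
combination of two fundamental sequences evaluated at the parameter `μ(t)`. Conversely, the
compatibility conditions glue the `f γ` to one function and the `g γ` to another, and the
combination built from these two is a solution.
-/

section ScalarRecurrence

variable {R E : Type*} [CommRing R] [AddCommGroup E] [Module R E]

/-- Sequences with values in a module that satisfy the homogeneous second order recurrence with
characteristic polynomial `λ² + aλ + b`. -/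
def IsSecondOrderRecurrent (a b : R) (u : ℕ → E) : Prop :=
  ∀ n, u (n + 2) + a • u (n + 1) + b • u n = 0

/-- The pairs of scalar solutions with `u n = A n • u 1 - B n • u 0` for every solution `u`. The
sign of `B` is that of the closed formula, whence `B 0 = -1`. -/
structure IsFundamentalPair (a b : R) (A B : ℕ → R) : Prop where
  left_recurrent : IsSecondOrderRecurrent a b A
  right_recurrent : IsSecondOrderRecurrent a b B
  left_zero : A 0 = 0
  left_one : A 1 = 1
  right_zero : B 0 = -1
  right_one : B 1 = 0

variable {a b : R} {A B : ℕ → R}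

theorem IsSecondOrderRecurrent.congr {u v : ℕ → E} (hu : IsSecondOrderRecurrent a b u)
    (h : ∀ n, u n = v n) : IsSecondOrderRecurrent a b v :=
  funext h ▸ hu

theorem IsSecondOrderRecurrent.ext {u v : ℕ → E} (hu : IsSecondOrderRecurrent a b u)
    (hv : IsSecondOrderRecurrent a b v) (h0 : u 0 = v 0) (h1 : u 1 = v 1) : u = v := by
  funext n
  induction n using Nat.twoStepInduction with
  | zero => exact h0
  | one => exact h1
  | more n ihn ihn1 =>
    have h := (hu n).trans (hv n).symm
    rw [ihn, ihn1] at h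
    exact add_right_cancel (add_right_cancel h)

theorem IsSecondOrderRecurrent.smul_sub_smul (hA : IsSecondOrderRecurrent a b A)
    (hB : IsSecondOrderRecurrent a b B) (v w : E) :
    IsSecondOrderRecurrent a b fun n => A n • v - B n • w := by
  intro n
  have hAn := hA n
  have hBn := hB n
  simp only [smul_eq_mul] at hAn hBn
  calc
    _ = (A (n + 2) + a * A (n + 1) + b * A n) • v - (B (n + 2) + a * B (n + 1) + b * B n) • w := by
      module
    _ = 0 := by rw [hAn, hBn, zero_smul, zero_smul, sub_zero]

theorem IsFundamentalPair.eq_smul_sub_smul (hAB : IsFundamentalPair a b A B) {u : ℕ → E}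
    (hu : IsSecondOrderRecurrent a b u) (n : ℕ) : u n = A n • u 1 - B n • u 0 := by
  refine congrFun (hu.ext (hAB.left_recurrent.smul_sub_smul hAB.right_recurrent _ _) ?_ ?_) n
  · simp [hAB.left_zero, hAB.right_zero]
  · simp [hAB.left_one, hAB.right_one]

end ScalarRecurrence

section Trigonometric

open Real

theorem isSecondOrderRecurrent_pow_mul_sin (r θ φ c : ℝ) :
    IsSecondOrderRecurrent (-(2 * r * cos θ)) (r ^ 2)
      fun n : ℕ => c * (r ^ n * sin (n * θ + φ)) := by
  intro n
  have hsin : sin ((n + 2 : ℕ) * θ + φ) + sin (n * θ + φ)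
      = 2 * cos θ * sin ((n + 1 : ℕ) * θ + φ) := by
    have hnext : (n + 2 : ℕ) * θ + φ = ((n + 1 : ℕ) * θ + φ) + θ := by push_cast; ring
    have hprev : n * θ + φ = ((n + 1 : ℕ) * θ + φ) - θ := by push_cast; ring
    rw [hnext, hprev, sin_add, sin_sub]
    ring
  simp only [smul_eq_mul]
  linear_combination c * r ^ (n + 2) * hsin

theorem isFundamentalPair_sin {r θ : ℝ} (hr : r ≠ 0) (hθ : sin θ ≠ 0) :
    IsFundamentalPair (-(2 * r * cos θ)) (r ^ 2)
      (fun n : ℕ => r ^ ((n : ℤ) - 1) * sin (n * θ) / sin θ)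
      (fun n : ℕ => r ^ n * sin (((n : ℝ) - 1) * θ) / sin θ) where
  left_recurrent := by
    refine (isSecondOrderRecurrent_pow_mul_sin r θ 0 (r⁻¹ / sin θ)).congr fun n => ?_
    rw [zpow_sub_one₀ hr, zpow_natCast, add_zero]
    ring
  right_recurrent := by
    refine (isSecondOrderRecurrent_pow_mul_sin r θ (-θ) (sin θ)⁻¹).congr fun n => ?_
    rw [show ((n : ℝ) - 1) * θ = n * θ + -θ by ring]
    ring
  left_zero := by simp
  left_one := by simp [hθ]
  right_zero := by simp [hθ]
  right_one := by simp

theorem sin_ne_zero_of_pos_of_lt_two_pi {θ : ℝ} (hpos : 0 < θ) (hlt : θ < 2 * π) (hne : θ ≠ π) :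
    sin θ ≠ 0 := by
  have hshift : sin (θ - π) ≠ 0 := by
    rw [Ne, sin_eq_zero_iff_of_lt_of_lt (by linarith) (by linarith), sub_eq_zero]
    exact hne
  rwa [sin_sub_pi, neg_ne_zero] at hshift

end Trigonometric

section MinCoord

variable {ι : Type*}

/-- The minimal coordinate `μ(t)` of a point, attained even for infinite `ι` because `ℕ` is
well-ordered; for empty `ι` it is `0`. -/
noncomputable def minCoord (t : ι → ℕ) : ℕ := ⨅ i, t i

theorem minCoord_le (t : ι → ℕ) (i : ι) : minCoord t ≤ t i :=
  ciInf_le' t i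

theorem minCoord_eq_of_forall_le {t : ι → ℕ} {β : ι} (h : ∀ i, t β ≤ t i) : minCoord t = t β :=
  have : Nonempty ι := ⟨β⟩
  le_antisymm (minCoord_le t β) (le_ciInf h)

variable [Nonempty ι]

theorem exists_eq_minCoord (t : ι → ℕ) : ∃ β, t β = minCoord t :=
  ciInf_mem t

theorem minCoord_add_const (t : ι → ℕ) (n : ℕ) :
    minCoord (fun i => t i + n) = minCoord t + n := by
  obtain ⟨β, hβ⟩ := exists_eq_minCoord t
  rw [← hβ]
  exact minCoord_eq_of_forall_le fun i => Nat.add_le_add_right (hβ ▸ minCoord_le t i) n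

end MinCoord

section BoundaryValues

variable {ι E : Type*}

/-- `x(t)|_{t^γ=k} = f_γ` for all `γ`, where `f_γ` is a function of the coordinates other
than `γ`. -/
def HasBoundaryValues (k : ℕ) (f : (γ : ι) → ({i : ι // i ≠ γ} → ℕ) → E)
    (x : (ι → ℕ) → E) : Prop :=
  ∀ γ : ι, ∀ t : ι → ℕ, t γ = k → x t = f γ (fun i => t i.1)

/-- Boundary data `f` at level `j` and `g` at level `k` agree where both apply: `f_α|_{t^β=k} =
g_β|_{t^α=j}` for all `α` and `β`. -/
def AreCompatible (j k : ℕ) (f g : (γ : ι) → ({i : ι // i ≠ γ} → ℕ) → E) : Prop :=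
  ∀ α β : ι, ∀ t : ι → ℕ, t α = j → t β = k → f α (fun i => t i.1) = g β (fun i => t i.1)

theorem AreCompatible.exists_hasBoundaryValues [Nonempty E] {k : ℕ}
    {f : (γ : ι) → ({i : ι // i ≠ γ} → ℕ) → E} (hf : AreCompatible k k f f) :
    ∃ x, HasBoundaryValues k f x := by
  have hvalue : ∀ t : ι → ℕ, ∃ v : E, ∀ γ, t γ = k → v = f γ (fun i => t i.1) := by
    intro t
    by_cases ht : ∃ α, t α = k
    · obtain ⟨α, hα⟩ := ht
      exact ⟨f α (fun i => t i.1), fun γ hγ => hf α γ t hα hγ⟩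
    · exact ⟨Classical.arbitrary E, fun γ hγ => absurd ⟨γ, hγ⟩ ht⟩
  choose x hx using hvalue
  exact ⟨x, fun γ t hγ => hx t γ hγ⟩

end BoundaryValues

section DiagonalRecurrence

variable {ι R E : Type*} [CommRing R] [AddCommGroup E] [Module R E]

/-- The diagonal recurrence `x(t + 2·𝟏) + a x(t + 𝟏) + b x(t) = 0` for functions on `ℕ^ι`. -/
def IsDiagonallyRecurrent (a b : R) (x : (ι → ℕ) → E) : Prop :=
  ∀ t : ι → ℕ, x (fun i => t i + 2) + a • x (fun i => t i + 1) + b • x t = 0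

/-- Solutions of the boundary value problem for the diagonal recurrence: `f` prescribes the values
on the hyperplanes `t^γ = 0` and `g` those on `t^γ = 1`. -/
def IsDiagonalSolution (a b : R) (f g : (γ : ι) → ({i : ι // i ≠ γ} → ℕ) → E)
    (x : (ι → ℕ) → E) : Prop :=
  IsDiagonallyRecurrent a b x ∧ HasBoundaryValues 0 f x ∧ HasBoundaryValues 1 g x

/-- The candidate solution of the diagonal recurrence: on the ray through `t` it is the combination
of `A` and `B` whose values at the first two points `t - μ(t)·𝟏` and `t - μ(t)·𝟏 + 𝟏` are those of
`F` and `G`. -/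
noncomputable def diagonalExtension (A B : ℕ → R) (F G : (ι → ℕ) → E) (t : ι → ℕ) : E :=
  A (minCoord t) • G (fun i => t i - minCoord t + 1)
    - B (minCoord t) • F (fun i => t i - minCoord t)

variable {a b : R} {A B : ℕ → R} {f g : (γ : ι) → ({i : ι // i ≠ γ} → ℕ) → E}

theorem IsDiagonallyRecurrent.isSecondOrderRecurrent {x : (ι → ℕ) → E}
    (hx : IsDiagonallyRecurrent a b x) (s : ι → ℕ) :
    IsSecondOrderRecurrent a b fun n => x (fun i => s i + n) :=
  fun n => hx fun i => s i + n

theorem IsDiagonalSolution.eq_smul_sub_smul {x : (ι → ℕ) → E} (hAB : IsFundamentalPair a b A B)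
    (hx : IsDiagonalSolution a b f g x) {β : ι} {t : ι → ℕ} (ht : ∀ i, t β ≤ t i) :
    x t = A (t β) • g β (fun i => t i.1 - t β + 1) - B (t β) • f β (fun i => t i.1 - t β) := by
  obtain ⟨hrec, hzero, hone⟩ := hx
  calc
    x t = x (fun i => t i - t β + t β) := by simp only [Nat.sub_add_cancel (ht _)]
    _ = A (t β) • x (fun i => t i - t β + 1) - B (t β) • x (fun i => t i - t β) :=
      hAB.eq_smul_sub_smul (hrec.isSecondOrderRecurrent fun i => t i - t β) (t β)
    _ = _ := by
      rw [hone β (fun i => t i - t β + 1) (by simp), hzero β (fun i => t i - t β) (by simp)]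

theorem IsFundamentalPair.diagonalExtension_of_minCoord_eq_zero (hAB : IsFundamentalPair a b A B)
    (F G : (ι → ℕ) → E) {t : ι → ℕ} (ht : minCoord t = 0) :
    diagonalExtension A B F G t = F t := by
  simp [diagonalExtension, ht, hAB.left_zero, hAB.right_zero]

theorem IsFundamentalPair.diagonalExtension_of_minCoord_eq_one (hAB : IsFundamentalPair a b A B)
    (F G : (ι → ℕ) → E) {t : ι → ℕ} (ht : minCoord t = 1) :
    diagonalExtension A B F G t = G t := by
  have hpos : ∀ i, 1 ≤ t i := fun i => ht ▸ minCoord_le t i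
  simp [diagonalExtension, ht, hAB.left_one, hAB.right_one, Nat.sub_add_cancel (hpos _)]

variable [Nonempty ι]

theorem IsDiagonalSolution.unique {x y : (ι → ℕ) → E} (hAB : IsFundamentalPair a b A B)
    (hx : IsDiagonalSolution a b f g x) (hy : IsDiagonalSolution a b f g y) : x = y := by
  funext t
  obtain ⟨β, hβ⟩ := exists_eq_minCoord t
  have hmin : ∀ i, t β ≤ t i := fun i => hβ ▸ minCoord_le t i
  rw [hx.eq_smul_sub_smul hAB hmin, hy.eq_smul_sub_smul hAB hmin]

theorem diagonalExtension_add_const (A B : ℕ → R) (F G : (ι → ℕ) → E) (t : ι → ℕ) (n : ℕ) :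
    diagonalExtension A B F G (fun i => t i + n) =
      A (minCoord t + n) • G (fun i => t i - minCoord t + 1)
        - B (minCoord t + n) • F (fun i => t i - minCoord t) := by
  simp only [diagonalExtension, minCoord_add_const, Nat.add_sub_add_right]

theorem isDiagonallyRecurrent_diagonalExtension (hA : IsSecondOrderRecurrent a b A)
    (hB : IsSecondOrderRecurrent a b B) (F G : (ι → ℕ) → E) :
    IsDiagonallyRecurrent a b (diagonalExtension A B F G) := by
  intro t
  rw [diagonalExtension_add_const, diagonalExtension_add_const]
  exact hA.smul_sub_smul hB _ _ (minCoord t)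

theorem IsFundamentalPair.isDiagonalSolution_diagonalExtension (hAB : IsFundamentalPair a b A B)
    (hfg : AreCompatible 0 1 f g) {F G : (ι → ℕ) → E} (hF : HasBoundaryValues 0 f F)
    (hG : HasBoundaryValues 1 g G) :
    IsDiagonalSolution a b f g (diagonalExtension A B F G) := by
  refine ⟨isDiagonallyRecurrent_diagonalExtension hAB.left_recurrent hAB.right_recurrent F G,
    fun γ t hγ => ?_, fun γ t hγ => ?_⟩
  · have hmin : minCoord t = 0 := Nat.le_zero.mp (hγ ▸ minCoord_le t γ)
    rw [hAB.diagonalExtension_of_minCoord_eq_zero F G hmin, hF γ t hγ]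
  · rcases Nat.le_one_iff_eq_zero_or_eq_one.mp (hγ ▸ minCoord_le t γ) with hmin | hmin
    · obtain ⟨β, hβ⟩ := exists_eq_minCoord t
      have hβ0 : t β = 0 := hβ.trans hmin
      rw [hAB.diagonalExtension_of_minCoord_eq_zero F G hmin, hF β t hβ0, hfg β γ t hβ0 hγ]
    · rw [hAB.diagonalExtension_of_minCoord_eq_one F G hmin, hG γ t hγ]

theorem IsFundamentalPair.existsUnique_isDiagonalSolution (hAB : IsFundamentalPair a b A B)
    (hff : AreCompatible 0 0 f f) (hgg : AreCompatible 1 1 g g) (hfg : AreCompatible 0 1 f g) :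
    ∃! x, IsDiagonalSolution a b f g x := by
  obtain ⟨F, hF⟩ := hff.exists_hasBoundaryValues
  obtain ⟨G, hG⟩ := hgg.exists_hasBoundaryValues
  have hsol := hAB.isDiagonalSolution_diagonalExtension hfg hF hG
  exact ⟨_, hsol, fun y hy => hy.unique hAB hsol⟩

end DiagonalRecurrence

theorem stmt_16_general {ι E : Type*} [Nonempty ι] [AddCommGroup E] [Module ℝ E] {a b r θ : ℝ}
    (hr : r ≠ 0) (hθ : Real.sin θ ≠ 0) (ha : a = -(2 * r * Real.cos θ)) (hb : b = r ^ 2)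
    {f g : (γ : ι) → ({i : ι // i ≠ γ} → ℕ) → E}
    (hff : AreCompatible 0 0 f f) (hgg : AreCompatible 1 1 g g) (hfg : AreCompatible 0 1 f g) :
    (∃! x, IsDiagonalSolution a b f g x) ∧
      ∀ x, IsDiagonalSolution a b f g x → ∀ β : ι, ∀ t : ι → ℕ, (∀ i, t β ≤ t i) →
        x t = (r ^ ((t β : ℤ) - 1) * Real.sin ((t β : ℝ) * θ) / Real.sin θ) •
                g β (fun i => t i.1 - t β + 1)
            - (r ^ (t β) * Real.sin (((t β : ℝ) - 1) * θ) / Real.sin θ) •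
                f β (fun i => t i.1 - t β) := by
  subst ha hb
  have hAB := isFundamentalPair_sin hr hθ
  exact ⟨hAB.existsUnique_isDiagonalSolution hff hgg hfg,
    fun x hx β t ht => hx.eq_smul_sub_smul hAB ht⟩

/-- Theorem 2(iii) of the paper: second order diagonal recurrence
`x(t+2·𝟏) + a x(t+𝟏) + b x(t) = 0` whose characteristic polynomial
`λ² + aλ + b` has non-real conjugate roots `r(cos θ ± i sin θ)`, `r > 0`,
`θ ∈ (0, 2π) ∖ {π}`.  Boundary data `f γ, g γ` are functions on `ℕ^{m-1}`,
encoded as functions on `{i : Fin m // i ≠ γ} → ℕ`; `μ(t) = t^β` is encoded as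
`∀ i, t β ≤ t i`.  For `t^β = 0` the factor `r^{t^β-1}` is interpreted as the
integer power `r^{(t^β : ℤ) - 1}` and `sin((t^β−1)θ)` as
`sin(((t^β : ℝ) − 1)θ)`. -/
theorem stmt_16 (m : ℕ) (hm : 2 ≤ m) (a b r θ : ℝ) (hr : 0 < r)
    (hθ1 : 0 < θ) (hθ2 : θ < 2 * Real.pi) (hθ3 : θ ≠ Real.pi)
    (ha : a = -(2 * r * Real.cos θ)) (hb : b = r ^ 2)
    (f g : (γ : Fin m) → ({i : Fin m // i ≠ γ} → ℕ) → ℝ)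
    (hff : ∀ α β : Fin m, ∀ t : Fin m → ℕ, t α = 0 → t β = 0 →
        f α (fun i => t i.1) = f β (fun i => t i.1))
    (hgg : ∀ α β : Fin m, ∀ t : Fin m → ℕ, t α = 1 → t β = 1 →
        g α (fun i => t i.1) = g β (fun i => t i.1))
    (hfg : ∀ α β : Fin m, ∀ t : Fin m → ℕ, t α = 0 → t β = 1 →
        f α (fun i => t i.1) = g β (fun i => t i.1)) :
    (∃! x : (Fin m → ℕ) → ℝ,
        (∀ t : Fin m → ℕ,
            x (fun i => t i + 2) + a * x (fun i => t i + 1) + b * x t = 0) ∧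
        (∀ γ : Fin m, ∀ t : Fin m → ℕ, t γ = 0 → x t = f γ (fun i => t i.1)) ∧
        (∀ γ : Fin m, ∀ t : Fin m → ℕ, t γ = 1 → x t = g γ (fun i => t i.1))) ∧
    (∀ x : (Fin m → ℕ) → ℝ,
        (∀ t : Fin m → ℕ,
            x (fun i => t i + 2) + a * x (fun i => t i + 1) + b * x t = 0) →
        (∀ γ : Fin m, ∀ t : Fin m → ℕ, t γ = 0 → x t = f γ (fun i => t i.1)) →
        (∀ γ : Fin m, ∀ t : Fin m → ℕ, t γ = 1 → x t = g γ (fun i => t i.1)) →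
        ∀ β : Fin m, ∀ t : Fin m → ℕ, (∀ i, t β ≤ t i) →
          x t = (r ^ ((t β : ℤ) - 1) * Real.sin ((t β : ℝ) * θ) / Real.sin θ) *
                  g β (fun i => t i.1 - t β + 1)
              - (r ^ (t β) * Real.sin (((t β : ℝ) - 1) * θ) / Real.sin θ) *
                  f β (fun i => t i.1 - t β)) := by
  have : Nonempty (Fin m) := ⟨⟨0, by omega⟩⟩
  obtain ⟨hexists, hformula⟩ := stmt_16_general hr.ne'
    (sin_ne_zero_of_pos_of_lt_two_pi hθ1 hθ2 hθ3) ha hb hff hgg hfg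
  exact ⟨hexists, fun x hx hzero hone => hformula x ⟨hx, hzero, hone⟩⟩
end

section
/- Let n ≥ 1, A ∈ Mat_n(ℝ), and f₁, f₂, f₃ : ℕ² → ℝⁿ with f₁(0,t³) = f₂(0,t³), f₁(t²,0) = f₃(0,t²), and f₂(t¹,0) = f₃(t¹,0) for all t¹,t²,t³ ∈ ℕ. Then there is a unique function x : ℕ³ → ℝⁿ satisfying x(t¹+1, t²+1, t³+1) = A·x(t¹,t²,t³) for all (t¹,t²,t³) ∈ ℕ³, x(0,t²,t³) = f₁(t²,t³), x(t¹,0,t³) = f₂(t¹,t³), and x(t¹,t²,0) = f₃(t¹,t²); it is given by x(t¹,t²,t³) = A^{t¹} f₁(t²−t¹, t³−t¹) if t¹ = min{t¹,t²,t³}, x(t¹,t²,t³) = A^{t²} f₂(t¹−t², t³−t²) if t² = min{t¹,t²,t³}, and x(t¹,t²,t³) = A^{t³} f₃(t¹−t³, t²−t³) if t³ = min{t¹,t²,t³}. -/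
/-!
The diagonals `{p + (k, k, k) | k ∈ ℕ}`, with `p` on one of the faces `tᵢ = 0`, partition `ℕ³`, and
the recurrence relates only values on the same diagonal. So the boundary values can be prescribed
freely as long as they agree where faces meet, and the point `t` is reached from its face in
`min t₁ t₂ t₃` steps.
-/

section DiagonalRecurrence

variable {α : Type*} {T : α → α} {f₁ f₂ f₃ : ℕ → ℕ → α} {x y : ℕ → ℕ → ℕ → α}

/-- The recurrence `x(t + (1, 1, 1)) = T (x t)` on `ℕ³`, for an arbitrary self-map `T` of the
space of values. -/
def DiagonalRecurrence (T : α → α) (x : ℕ → ℕ → ℕ → α) : Prop :=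
  ∀ t₁ t₂ t₃ : ℕ, x (t₁ + 1) (t₂ + 1) (t₃ + 1) = T (x t₁ t₂ t₃)

namespace DiagonalRecurrence

lemma apply_add (hx : DiagonalRecurrence T x) (t₁ t₂ t₃ k : ℕ) :
    x (t₁ + k) (t₂ + k) (t₃ + k) = T^[k] (x t₁ t₂ t₃) := by
  induction k with
  | zero => rfl
  | succ k ih => rw [Function.iterate_succ_apply', ← ih]; exact hx _ _ _

lemma apply_eq_iterate_sub (hx : DiagonalRecurrence T x) {t₁ t₂ t₃ k : ℕ}
    (h₁ : k ≤ t₁) (h₂ : k ≤ t₂) (h₃ : k ≤ t₃) :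
    x t₁ t₂ t₃ = T^[k] (x (t₁ - k) (t₂ - k) (t₃ - k)) := by
  simpa only [Nat.sub_add_cancel, h₁, h₂, h₃] using hx.apply_add (t₁ - k) (t₂ - k) (t₃ - k) k

lemma eq_of_eq_on_boundary (hx : DiagonalRecurrence T x) (hy : DiagonalRecurrence T y)
    (h₁ : ∀ t₂ t₃, x 0 t₂ t₃ = y 0 t₂ t₃) (h₂ : ∀ t₁ t₃, x t₁ 0 t₃ = y t₁ 0 t₃)
    (h₃ : ∀ t₁ t₂, x t₁ t₂ 0 = y t₁ t₂ 0) :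
    ∀ t₁ t₂ t₃, x t₁ t₂ t₃ = y t₁ t₂ t₃
  | 0, t₂, t₃ => h₁ t₂ t₃
  | t₁ + 1, 0, t₃ => h₂ (t₁ + 1) t₃
  | t₁ + 1, t₂ + 1, 0 => h₃ (t₁ + 1) (t₂ + 1)
  | t₁ + 1, t₂ + 1, t₃ + 1 => by
    rw [hx, hy, eq_of_eq_on_boundary hx hy h₁ h₂ h₃ t₁ t₂ t₃]

end DiagonalRecurrence

/-- The solution of the diagonal recurrence with boundary values `f₁`, `f₂`, `f₃` on the faces
`t₁ = 0`, `t₂ = 0`, `t₃ = 0`. Where faces meet, the one with the smallest index takes precedence. -/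
def diagonalSolution (T : α → α) (f₁ f₂ f₃ : ℕ → ℕ → α) : ℕ → ℕ → ℕ → α
  | 0, t₂, t₃ => f₁ t₂ t₃
  | t₁ + 1, 0, t₃ => f₂ (t₁ + 1) t₃
  | t₁ + 1, t₂ + 1, 0 => f₃ (t₁ + 1) (t₂ + 1)
  | t₁ + 1, t₂ + 1, t₃ + 1 => T (diagonalSolution T f₁ f₂ f₃ t₁ t₂ t₃)

lemma diagonalRecurrence_diagonalSolution :
    DiagonalRecurrence T (diagonalSolution T f₁ f₂ f₃) := by
  intro t₁ t₂ t₃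
  rw [diagonalSolution]

lemma diagonalSolution_zero_left (t₂ t₃ : ℕ) :
    diagonalSolution T f₁ f₂ f₃ 0 t₂ t₃ = f₁ t₂ t₃ := by
  rw [diagonalSolution]

lemma diagonalSolution_zero_middle (h₁₂ : ∀ t₃, f₁ 0 t₃ = f₂ 0 t₃) (t₁ t₃ : ℕ) :
    diagonalSolution T f₁ f₂ f₃ t₁ 0 t₃ = f₂ t₁ t₃ := by
  cases t₁ with
  | zero => rw [diagonalSolution, h₁₂]
  | succ t₁ => rw [diagonalSolution]

lemma diagonalSolution_zero_right (h₁₃ : ∀ t₂, f₁ t₂ 0 = f₃ 0 t₂)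
    (h₂₃ : ∀ t₁, f₂ t₁ 0 = f₃ t₁ 0) (t₁ t₂ : ℕ) :
    diagonalSolution T f₁ f₂ f₃ t₁ t₂ 0 = f₃ t₁ t₂ := by
  cases t₁ with
  | zero => rw [diagonalSolution, h₁₃]
  | succ t₁ =>
    cases t₂ with
    | zero => rw [diagonalSolution, h₂₃]
    | succ t₂ => rw [diagonalSolution]

theorem existsUnique_diagonalRecurrence (T : α → α)
    (h₁₂ : ∀ t₃, f₁ 0 t₃ = f₂ 0 t₃) (h₁₃ : ∀ t₂, f₁ t₂ 0 = f₃ 0 t₂)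
    (h₂₃ : ∀ t₁, f₂ t₁ 0 = f₃ t₁ 0) :
    ∃! x : ℕ → ℕ → ℕ → α, DiagonalRecurrence T x ∧
      (∀ t₂ t₃, x 0 t₂ t₃ = f₁ t₂ t₃) ∧
      (∀ t₁ t₃, x t₁ 0 t₃ = f₂ t₁ t₃) ∧
      (∀ t₁ t₂, x t₁ t₂ 0 = f₃ t₁ t₂) := by
  refine existsUnique_of_exists_of_unique
    ⟨diagonalSolution T f₁ f₂ f₃, diagonalRecurrence_diagonalSolution, diagonalSolution_zero_left,
      diagonalSolution_zero_middle h₁₂, diagonalSolution_zero_right h₁₃ h₂₃⟩ ?_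
  rintro x y ⟨hx, hx₁, hx₂, hx₃⟩ ⟨hy, hy₁, hy₂, hy₃⟩
  exact funext₃ (hx.eq_of_eq_on_boundary hy
    (fun t₂ t₃ => (hx₁ t₂ t₃).trans (hy₁ t₂ t₃).symm)
    (fun t₁ t₃ => (hx₂ t₁ t₃).trans (hy₂ t₁ t₃).symm)
    (fun t₁ t₂ => (hx₃ t₁ t₂).trans (hy₃ t₁ t₂).symm))

theorem stmt_18_general (T : α → α)
    (h₁₂ : ∀ t₃, f₁ 0 t₃ = f₂ 0 t₃) (h₁₃ : ∀ t₂, f₁ t₂ 0 = f₃ 0 t₂)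
    (h₂₃ : ∀ t₁, f₂ t₁ 0 = f₃ t₁ 0) :
    (∃! x : ℕ → ℕ → ℕ → α, DiagonalRecurrence T x ∧
      (∀ t₂ t₃, x 0 t₂ t₃ = f₁ t₂ t₃) ∧
      (∀ t₁ t₃, x t₁ 0 t₃ = f₂ t₁ t₃) ∧
      (∀ t₁ t₂, x t₁ t₂ 0 = f₃ t₁ t₂)) ∧
    (∀ x : ℕ → ℕ → ℕ → α, DiagonalRecurrence T x →
      (∀ t₂ t₃, x 0 t₂ t₃ = f₁ t₂ t₃) →
      (∀ t₁ t₃, x t₁ 0 t₃ = f₂ t₁ t₃) →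
      (∀ t₁ t₂, x t₁ t₂ 0 = f₃ t₁ t₂) →
      (∀ t₁ t₂ t₃, t₁ ≤ t₂ → t₁ ≤ t₃ → x t₁ t₂ t₃ = T^[t₁] (f₁ (t₂ - t₁) (t₃ - t₁))) ∧
      (∀ t₁ t₂ t₃, t₂ ≤ t₁ → t₂ ≤ t₃ → x t₁ t₂ t₃ = T^[t₂] (f₂ (t₁ - t₂) (t₃ - t₂))) ∧
      (∀ t₁ t₂ t₃, t₃ ≤ t₁ → t₃ ≤ t₂ → x t₁ t₂ t₃ = T^[t₃] (f₃ (t₁ - t₃) (t₂ - t₃)))) := by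
  refine ⟨existsUnique_diagonalRecurrence T h₁₂ h₁₃ h₂₃, fun x hx hx₁ hx₂ hx₃ => ⟨?_, ?_, ?_⟩⟩
  · intro t₁ t₂ t₃ h₂ h₃
    rw [hx.apply_eq_iterate_sub le_rfl h₂ h₃, Nat.sub_self, hx₁]
  · intro t₁ t₂ t₃ h₁ h₃
    rw [hx.apply_eq_iterate_sub h₁ le_rfl h₃, Nat.sub_self, hx₂]
  · intro t₁ t₂ t₃ h₁ h₂
    rw [hx.apply_eq_iterate_sub h₁ h₂ le_rfl, Nat.sub_self, hx₃]

end DiagonalRecurrence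

lemma iterate_mulVec {ι R : Type*} [Fintype ι] [DecidableEq ι] [Semiring R]
    (A : Matrix ι ι R) (k : ℕ) (v : ι → R) : A.mulVec^[k] v = (A ^ k).mulVec v := by
  induction k with
  | zero => rw [Function.iterate_zero_apply, pow_zero, Matrix.one_mulVec]
  | succ k ih => rw [Function.iterate_succ_apply', ih, Matrix.mulVec_mulVec, pow_succ']

/-- Trivariate example: the diagonal recurrence
`x(t¹+1, t²+1, t³+1) = A x(t¹,t²,t³)` with boundary data `f₁, f₂, f₃` has a
unique solution, given explicitly. -/
theorem stmt_18 (n : ℕ) (hn : 1 ≤ n) (A : Matrix (Fin n) (Fin n) ℝ)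
    (f1 f2 f3 : ℕ → ℕ → Fin n → ℝ)
    (h12 : ∀ t3 : ℕ, f1 0 t3 = f2 0 t3)
    (h13 : ∀ t2 : ℕ, f1 t2 0 = f3 0 t2)
    (h23 : ∀ t1 : ℕ, f2 t1 0 = f3 t1 0) :
    (∃! x : ℕ → ℕ → ℕ → Fin n → ℝ,
        (∀ t1 t2 t3 : ℕ,
            x (t1 + 1) (t2 + 1) (t3 + 1) = A.mulVec (x t1 t2 t3)) ∧
        (∀ t2 t3 : ℕ, x 0 t2 t3 = f1 t2 t3) ∧
        (∀ t1 t3 : ℕ, x t1 0 t3 = f2 t1 t3) ∧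
        (∀ t1 t2 : ℕ, x t1 t2 0 = f3 t1 t2)) ∧
    (∀ x : ℕ → ℕ → ℕ → Fin n → ℝ,
        (∀ t1 t2 t3 : ℕ,
            x (t1 + 1) (t2 + 1) (t3 + 1) = A.mulVec (x t1 t2 t3)) →
        (∀ t2 t3 : ℕ, x 0 t2 t3 = f1 t2 t3) →
        (∀ t1 t3 : ℕ, x t1 0 t3 = f2 t1 t3) →
        (∀ t1 t2 : ℕ, x t1 t2 0 = f3 t1 t2) →
        (∀ t1 t2 t3 : ℕ, t1 ≤ t2 → t1 ≤ t3 →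
            x t1 t2 t3 = (A ^ t1).mulVec (f1 (t2 - t1) (t3 - t1))) ∧
        (∀ t1 t2 t3 : ℕ, t2 ≤ t1 → t2 ≤ t3 →
            x t1 t2 t3 = (A ^ t2).mulVec (f2 (t1 - t2) (t3 - t2))) ∧
        (∀ t1 t2 t3 : ℕ, t3 ≤ t1 → t3 ≤ t2 →
            x t1 t2 t3 = (A ^ t3).mulVec (f3 (t1 - t3) (t2 - t3)))) := by
  simpa only [DiagonalRecurrence, iterate_mulVec] using stmt_18_general A.mulVec h12 h13 h23
end
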